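/- arXiv:1308.0686 — 4 statements merged into one kernel-verified Lean document; each statement's English description precedes it below -/
import Mathlib

section
/- Threshold structure of the optimal policy (sum power, no backtracking): Let W ⊂ (0,∞) be a nonempty finite set with strictly positive probability mass function p_W, S ⊂ (0,∞) a nonempty finite set, θ ∈ (0,1), ξ_o ≥ 0, ξ_r ≥ 0, and integers A ≥ 0, B ≥ 2. Let P_out : {1,…,A+B} × S × W → [0,1] be nondecreasing in its first argument. Write E_W f := Σ_{w∈W} p_W(w) f(w) and m(r,w) := min_{γ∈S} ( γ + ξ_o·P_out(r,γ,w) ). Suppose J : {A+1,…,A+B} × W → ℝ and J₀ ∈ ℝ satisfy the Bellman equations: for A+1 ≤ r ≤ A+B−1, J(r,w) = min{ m(r,w) + ξ_r + J₀ , θ·E_W m(r+1,·) + (1−θ)·E_W J(r+1,·) }, and J(A+B,w) = m(A+B,w) + ξ_r + J₀, and assume that for each w ∈ W the map r ↦ J(r,w) is nondecreasing on {A+1,…,A+B}. Define c_th(r) := θ·E_W m(r+1,·) + (1−θ)·E_W J(r+1,·) − ξ_r − J₀ for A+1 ≤ r ≤ A+B−1. Then: (i) for each A+1 ≤ r ≤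 A+B−1 and w ∈ W, the first (placement) term attains the minimum in the Bellman equation at (r,w) if and only if m(r,w) ≤ c_th(r); (ii) the threshold c_th(r) is nondecreasing in r on {A+1,…,A+B−1}. -/
/-- Threshold structure of the optimal policy (sum power, no backtracking): at state `(r,w)`
the placement term attains the minimum in the Bellman equation iff `m(r,w) ≤ c_th(r)`,
and the threshold `c_th` is nondecreasing in `r`. -/
theorem threshold_structure_sum_power
    (W : Finset ℝ) (hW : W.Nonempty) (hWpos : ∀ w ∈ W, 0 < w)
    (pW : ℝ → ℝ) (hpW : ∀ w ∈ W, 0 < pW w) (hpWsum : ∑ w ∈ W, pW w = 1)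
    (S : Finset ℝ) (hS : S.Nonempty) (hSpos : ∀ γ ∈ S, 0 < γ)
    (θ : ℝ) (hθ : 0 < θ) (hθ1 : θ < 1)
    (ξo ξr : ℝ) (hξo : 0 ≤ ξo) (hξr : 0 ≤ ξr)
    (A B : ℕ) (hB : 2 ≤ B)
    (Pout : ℕ → ℝ → ℝ → ℝ)
    (hPrange : ∀ r, 1 ≤ r → r ≤ A + B → ∀ γ ∈ S, ∀ w ∈ W,
      0 ≤ Pout r γ w ∧ Pout r γ w ≤ 1)
    (hPmono : ∀ γ ∈ S, ∀ w ∈ W, ∀ r r', 1 ≤ r → r ≤ r' → r' ≤ A + B →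
      Pout r γ w ≤ Pout r' γ w)
    -- the optimal one-hop cost `m(r,w) = min_{γ∈S}(γ + ξ_o P_out(r,γ,w))`
    (m : ℕ → ℝ → ℝ) (hm : ∀ r w, m r w = S.inf' hS fun γ => γ + ξo * Pout r γ w)
    -- expectation over the shadowing `E_W f = Σ_w p_W(w) f(w)`
    (EW : (ℝ → ℝ) → ℝ) (hEW : ∀ f, EW f = ∑ w ∈ W, pW w * f w)
    -- the optimal cost-to-go, satisfying the Bellman equations
    (J : ℕ → ℝ → ℝ) (J₀ : ℝ)
    (hBell : ∀ r, A + 1 ≤ r → r ≤ A + B - 1 → ∀ w ∈ W,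
      J r w = min (m r w + ξr + J₀)
        (θ * EW (m (r + 1)) + (1 - θ) * EW (J (r + 1))))
    (hBellEnd : ∀ w ∈ W, J (A + B) w = m (A + B) w + ξr + J₀)
    -- `J(r,w)` nondecreasing in `r`
    (hJmono : ∀ w ∈ W, ∀ r r', A + 1 ≤ r → r ≤ r' → r' ≤ A + B → J r w ≤ J r' w)
    -- the threshold
    (cth : ℕ → ℝ)
    (hcth : ∀ r, A + 1 ≤ r → r ≤ A + B - 1 →
      cth r = θ * EW (m (r + 1)) + (1 - θ) * EW (J (r + 1)) - ξr - J₀) :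
    -- (i) placement is optimal iff `m(r,w) ≤ c_th(r)`
    (∀ r, A + 1 ≤ r → r ≤ A + B - 1 → ∀ w ∈ W,
      (min (m r w + ξr + J₀) (θ * EW (m (r + 1)) + (1 - θ) * EW (J (r + 1)))
          = m r w + ξr + J₀
        ↔ m r w ≤ cth r)) ∧
    -- (ii) `c_th` is nondecreasing
    (∀ r r', A + 1 ≤ r → r ≤ r' → r' ≤ A + B - 1 → cth r ≤ cth r') := by
  have EW_mono : ∀ f g : ℝ → ℝ, (∀ w ∈ W, f w ≤ g w) → EW f ≤ EW g := by
    intro f g hfg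
    rw [hEW, hEW]
    exact Finset.sum_le_sum fun w hw => mul_le_mul_of_nonneg_left (hfg w hw) (hpW w hw).le
  have m_mono : ∀ w ∈ W, ∀ r r', 1 ≤ r → r ≤ r' → r' ≤ A + B → m r w ≤ m r' w := by
    intro w hw r r' hr hrr' hr'
    rw [hm, hm]
    exact Finset.inf'_mono_fun fun γ hγ =>
      add_le_add le_rfl (mul_le_mul_of_nonneg_left (hPmono γ hγ w hw r r' hr hrr' hr') hξo)
  refine ⟨fun r hr hr' w _ => ?_, fun r r' hr hrr' hr' => ?_⟩
  · rw [min_eq_left_iff, hcth r hr hr']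
    constructor <;> intro h <;> linarith
  · rw [hcth r hr (hrr'.trans hr'), hcth r' (hr.trans hrr') hr']
    have hmE : EW (m (r + 1)) ≤ EW (m (r' + 1)) :=
      EW_mono _ _ fun w hw => m_mono w hw _ _ (by omega) (by omega) (by omega)
    have hJE : EW (J (r + 1)) ≤ EW (J (r' + 1)) :=
      EW_mono _ _ fun w hw => hJmono w hw _ _ (by omega) (by omega) (by omega)
    have hθm := mul_le_mul_of_nonneg_left hmE hθ.le
    have hθJ := mul_le_mul_of_nonneg_left hJE (sub_nonneg.mpr hθ1.le)
    linarith
end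

section
/- Structural properties of the max-power no-backtracking value iterates: Let W ⊂ (0,∞) be a nonempty finite set with strictly positive probability mass function p_W, S ⊂ (0,∞) a nonempty finite set, θ ∈ (0,1), ξ_o ≥ 0, ξ_r ≥ 0, integers A ≥ 0, B ≥ 2, and G := {0} ∪ S. Assume P_out : {1,…,A+B} × S × W → [0,1] is nondecreasing in its first argument and nonincreasing in its third argument. Define the value iteration: J^{(0)} ≡ 0 on {A+1,…,A+B} × W × G, J₀^{(0)} ≡ 0 on G, and for k ≥ 0: J^{(k+1)}(r,w,γ_max) = min{ min_{γ∈S}( ξ_o·P_out(r,γ,w) + ξ_r + J₀^{(k)}(max{γ,γ_max}) ) , θ·E_W min_{γ∈S}( max{γ,γ_max} + ξ_o·P_out(r+1,γ,·) ) + (1−θ)·E_W J^{(k)}(r+1,·,γ_max) } for A+1 ≤ r ≤ A+B−1; J^{(k+1)}(A+B,w,γ_max) = min_{γ∈S}( ξ_o·P_out(A+B,γ,w) + ξ_r + J₀^{(k)}(max{γ,γ_max}) ); J₀^{(k+1)}(γ_max) = Σ_{j=1}^{A+1} (1−θ)^{j−1}·θ·E_W min_{γ∈S}( max{γ,γ_max}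 + ξ_o·P_out(j,γ,·) ) + (1−θ)^{A+1}·E_W J^{(k)}(A+1,·,γ_max), where E_W f := Σ_{w∈W} p_W(w) f(w). Then for every k ≥ 0: J^{(k)}(r,w,γ_max) is nondecreasing in r, nondecreasing in γ_max, and nonincreasing in w; and J₀^{(k)}(γ_max) is nondecreasing in γ_max. -/
/-- Structural properties of the max-power no-backtracking value iterates: each iterate
`J^{(k)}(r,w,γ_max)` is nondecreasing in `r`, nondecreasing in `γ_max`, and nonincreasing
in `w`; and `J₀^{(k)}(γ_max)` is nondecreasing in `γ_max`. -/
theorem max_power_value_iterates_structure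
    (W : Finset ℝ) (hW : W.Nonempty) (hWpos : ∀ w ∈ W, 0 < w)
    (pW : ℝ → ℝ) (hpW : ∀ w ∈ W, 0 < pW w) (hpWsum : ∑ w ∈ W, pW w = 1)
    (S : Finset ℝ) (hS : S.Nonempty) (hSpos : ∀ γ ∈ S, 0 < γ)
    (θ : ℝ) (hθ : 0 < θ) (hθ1 : θ < 1)
    (ξo ξr : ℝ) (hξo : 0 ≤ ξo) (hξr : 0 ≤ ξr)
    (A B : ℕ) (hB : 2 ≤ B)
    (G : Finset ℝ) (hG : G = insert 0 S)
    (Pout : ℕ → ℝ → ℝ → ℝ)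
    (hPrange : ∀ r, 1 ≤ r → r ≤ A + B → ∀ γ ∈ S, ∀ w ∈ W,
      0 ≤ Pout r γ w ∧ Pout r γ w ≤ 1)
    (hPmono_r : ∀ γ ∈ S, ∀ w ∈ W, ∀ r r', 1 ≤ r → r ≤ r' → r' ≤ A + B →
      Pout r γ w ≤ Pout r' γ w)
    (hPanti_w : ∀ r, 1 ≤ r → r ≤ A + B → ∀ γ ∈ S, ∀ w ∈ W, ∀ w' ∈ W, w ≤ w' →
      Pout r γ w' ≤ Pout r γ w)
    -- the value iterates `J^{(k)}(r,w,γ_max)` and `J₀^{(k)}(γ_max)`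
    (Jk : ℕ → ℕ → ℝ → ℝ → ℝ) (J0k : ℕ → ℝ → ℝ)
    (hbase : ∀ r w γmax, Jk 0 r w γmax = 0) (hbase0 : ∀ γmax, J0k 0 γmax = 0)
    (hrec1 : ∀ k r, A + 1 ≤ r → r ≤ A + B - 1 → ∀ w ∈ W, ∀ γmax ∈ G,
      Jk (k + 1) r w γmax = min
        (S.inf' hS fun γ => ξo * Pout r γ w + ξr + J0k k (max γ γmax))
        (θ * (∑ w' ∈ W, pW w' *
            S.inf' hS fun γ => max γ γmax + ξo * Pout (r + 1) γ w')
          + (1 - θ) * ∑ w' ∈ W, pW w' * Jk k (r + 1) w' γmax))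
    (hrec2 : ∀ k, ∀ w ∈ W, ∀ γmax ∈ G,
      Jk (k + 1) (A + B) w γmax =
        S.inf' hS fun γ => ξo * Pout (A + B) γ w + ξr + J0k k (max γ γmax))
    (hrec3 : ∀ k, ∀ γmax ∈ G,
      J0k (k + 1) γmax =
        (∑ j ∈ Finset.Icc 1 (A + 1), (1 - θ) ^ (j - 1) * θ *
          ∑ w' ∈ W, pW w' * S.inf' hS fun γ => max γ γmax + ξo * Pout j γ w')
        + (1 - θ) ^ (A + 1) * ∑ w' ∈ W, pW w' * Jk k (A + 1) w' γmax) :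
    ∀ k : ℕ,
      -- nondecreasing in r
      (∀ w ∈ W, ∀ γmax ∈ G, ∀ r r', A + 1 ≤ r → r ≤ r' → r' ≤ A + B →
        Jk k r w γmax ≤ Jk k r' w γmax) ∧
      -- nondecreasing in γmax
      (∀ r, A + 1 ≤ r → r ≤ A + B → ∀ w ∈ W, ∀ γmax ∈ G, ∀ γmax' ∈ G, γmax ≤ γmax' →
        Jk k r w γmax ≤ Jk k r w γmax') ∧
      -- nonincreasing in w
      (∀ r, A + 1 ≤ r → r ≤ A + B → ∀ γmax ∈ G, ∀ w ∈ W, ∀ w' ∈ W, w ≤ w' →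
        Jk k r w' γmax ≤ Jk k r w γmax) ∧
      -- J₀^{(k)} nondecreasing in γmax
      (∀ γmax ∈ G, ∀ γmax' ∈ G, γmax ≤ γmax' → J0k k γmax ≤ J0k k γmax') := by
  have hG_max : ∀ γ ∈ S, ∀ g ∈ G, max γ g ∈ G := by
    intro γ hγ g hg
    rcases max_choice γ g with h | h <;> rw [h]
    · exact hG ▸ Finset.mem_insert_of_mem hγ
    · exact hg
  have hθ' : 0 ≤ 1 - θ := by linarith
  have expect_le : ∀ f g : ℝ → ℝ, (∀ w ∈ W, f w ≤ g w) →
      ∑ w ∈ W, pW w * f w ≤ ∑ w ∈ W, pW w * g w := fun f g h =>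
    Finset.sum_le_sum fun w hw => mul_le_mul_of_nonneg_left (h w hw) (hpW w hw).le
  have terminal_le : ∀ r r', 1 ≤ r → r ≤ r' → r' ≤ A + B → ∀ g g', g ≤ g' →
      ∑ w ∈ W, pW w * (S.inf' hS fun γ => max γ g + ξo * Pout r γ w) ≤
        ∑ w ∈ W, pW w * (S.inf' hS fun γ => max γ g' + ξo * Pout r' γ w) := by
    intro r r' hr hrr hr' g g' hg
    refine expect_le _ _ fun w hw => Finset.inf'_mono_fun fun γ hγ => ?_
    exact add_le_add (max_le_max_left γ hg)
      (mul_le_mul_of_nonneg_left (hPmono_r γ hγ w hw r r' hr hrr hr') hξo)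
  -- Joint monotonicity in all arguments is what passes through the recursion.
  have joint : ∀ k : ℕ,
      (∀ r r', A + 1 ≤ r → r ≤ r' → r' ≤ A + B → ∀ w ∈ W, ∀ w' ∈ W, w' ≤ w →
        ∀ g ∈ G, ∀ g' ∈ G, g ≤ g' → Jk k r w g ≤ Jk k r' w' g') ∧
      (∀ g ∈ G, ∀ g' ∈ G, g ≤ g' → J0k k g ≤ J0k k g') := by
    intro k
    induction k with
    | zero => simp [hbase, hbase0]
    | succ k ih =>
      obtain ⟨ihJ, ihJ0⟩ := ih
      have place_le : ∀ r r', A + 1 ≤ r → r ≤ r' → r' ≤ A + B →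
          ∀ w ∈ W, ∀ w' ∈ W, w' ≤ w → ∀ g ∈ G, ∀ g' ∈ G, g ≤ g' →
          (S.inf' hS fun γ => ξo * Pout r γ w + ξr + J0k k (max γ g)) ≤
            S.inf' hS fun γ => ξo * Pout r' γ w' + ξr + J0k k (max γ g') := by
        intro r r' hr hrr hr' w hw w' hw' hww g hg g' hg' hgg
        refine Finset.inf'_mono_fun fun γ hγ => ?_
        have hP : Pout r γ w ≤ Pout r' γ w' :=
          (hPanti_w r (by lia) (by lia) γ hγ w' hw' w hw hww).trans
            (hPmono_r γ hγ w' hw' r r' (by lia) hrr hr')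
        have hJ := ihJ0 _ (hG_max γ hγ g hg) _ (hG_max γ hγ g' hg') (max_le_max_left γ hgg)
        have := mul_le_mul_of_nonneg_left hP hξo
        linarith
      constructor
      · intro r r' hr hrr hr' w hw w' hw' hww g hg g' hg' hgg
        have hplace := place_le r r' hr hrr hr' w hw w' hw' hww g hg g' hg' hgg
        rcases hr'.eq_or_lt with rfl | hlt
        · rw [hrec2 k w' hw' g' hg']
          rcases hrr.eq_or_lt with rfl | hlt
          · rwa [hrec2 k w hw g hg]
          · rw [hrec1 k r hr (by lia) w hw g hg]
            exact (min_le_left _ _).trans hplace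
        · rw [hrec1 k r hr (by lia) w hw g hg,
            hrec1 k r' (by lia) (by lia) w' hw' g' hg']
          refine min_le_min hplace (add_le_add ?_ ?_)
          · exact mul_le_mul_of_nonneg_left
              (terminal_le (r + 1) (r' + 1) (by lia) (by lia) (by lia) g g' hgg) hθ.le
          · exact mul_le_mul_of_nonneg_left (expect_le _ _ fun v hv =>
              ihJ (r + 1) (r' + 1) (by lia) (by lia) (by lia)
                v hv v hv le_rfl g hg g' hg' hgg) hθ'
      · intro g hg g' hg' hgg
        rw [hrec3 k g hg, hrec3 k g' hg']
        refine add_le_add (Finset.sum_le_sum fun j hj => ?_) ?_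
        · rw [Finset.mem_Icc] at hj
          exact mul_le_mul_of_nonneg_left
            (terminal_le j j hj.1 le_rfl (by lia) g g' hgg)
            (mul_nonneg (pow_nonneg hθ' _) hθ.le)
        · exact mul_le_mul_of_nonneg_left (expect_le _ _ fun v hv =>
            ihJ (A + 1) (A + 1) le_rfl le_rfl (by lia)
              v hv v hv le_rfl g hg g' hg' hgg) (pow_nonneg hθ' _)
  intro k
  obtain ⟨hJ, hJ0⟩ := joint k
  exact ⟨fun w hw g hg r r' hr hrr hr' =>
      hJ r r' hr hrr hr' w hw w hw le_rfl g hg g hg le_rfl,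
    fun r hr hr' w hw g hg g' hg' hgg =>
      hJ r r hr le_rfl hr' w hw w hw le_rfl g hg g' hg' hgg,
    fun r hr hr' g hg w hw w' hw' hww =>
      hJ r r hr le_rfl hr' w' hw' w hw hww g hg g hg le_rfl,
    hJ0⟩
end

section
/- Structural properties of the backtracking value iterates in the costs (Lemma: J is increasing and jointly concave in ξ_r and ξ_o): Let W ⊂ (0,∞) be a nonempty finite set with strictly positive probability mass function p_W, S ⊂ (0,∞) a nonempty finite set, θ ∈ (0,1), and integers A ≥ 0, B ≥ 1. Let P_out : {1,…,A+B} × S × W → [0,1] be any function and for w = (w_{A+1},…,w_{A+B}) ∈ W^B let g(w) := Π_{r=A+1}^{A+B} p_W(w_r). For parameters (ξ_r, ξ_o) ∈ [0,∞)², define J^{(0)} ≡ 0 on W^B and on {0,…,B−1}, and for k ≥ 0: J^{(k+1)}(w) = min_{u∈{A+1,…,A+B}, γ∈S} ( ξ_r + γ + ξ_o·P_out(u,γ,w_u) + J^{(k)}(A+B−u;𝟎) ), and J^{(k+1)}(z;𝟎) = Σ_{j=1}^{A+B−z} (1−θ)^{j−1}·θ·E_W min_{γ∈S}( γ + ξ_o·P_out(z+j,γ,·)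 ) + (1−θ)^{A+B−z}·Σ_{w∈W^B} g(w)·J^{(k)}(w), for 0 ≤ z ≤ B−1, where E_W f := Σ_{w∈W} p_W(w) f(w). Then for every k ≥ 0, each of the maps (ξ_r, ξ_o) ↦ J^{(k)}(w) (for each fixed w ∈ W^B) and (ξ_r, ξ_o) ↦ J^{(k)}(z;𝟎) (for each fixed 0 ≤ z ≤ B−1) is nondecreasing in each coordinate and jointly concave on [0,∞)². -/
section MonotoneConcave

variable {E ι : Type*} [AddCommMonoid E] [Module ℝ E] [Preorder E] {s : Set E}

/-- A real function that is both monotone and concave on `s`. -/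
def MonotoneConcaveOn (s : Set E) (f : E → ℝ) : Prop :=
  MonotoneOn f s ∧ ConcaveOn ℝ s f

namespace MonotoneConcaveOn

theorem const (hs : Convex ℝ s) (c : ℝ) : MonotoneConcaveOn s (fun _ => c) :=
  ⟨fun _ _ _ _ _ => le_rfl, concaveOn_const c hs⟩

theorem add {f g : E → ℝ} (hf : MonotoneConcaveOn s f) (hg : MonotoneConcaveOn s g) :
    MonotoneConcaveOn s (fun x => f x + g x) :=
  ⟨hf.1.add hg.1, hf.2.add hg.2⟩

theorem const_mul {f : E → ℝ} {c : ℝ} (hc : 0 ≤ c) (hf : MonotoneConcaveOn s f) :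
    MonotoneConcaveOn s (fun x => c * f x) :=
  ⟨fun _ hx _ hy hxy => mul_le_mul_of_nonneg_left (hf.1 hx hy hxy) hc, hf.2.smul hc⟩

theorem sum (hs : Convex ℝ s) {t : Finset ι} {f : ι → E → ℝ}
    (hf : ∀ i ∈ t, MonotoneConcaveOn s (f i)) :
    MonotoneConcaveOn s (fun x => ∑ i ∈ t, f i x) := by
  classical
  induction t using Finset.induction_on with
  | empty => simpa using const hs 0
  | insert a t ha ih =>
    simp only [Finset.sum_insert ha]
    exact (hf a (t.mem_insert_self a)).add
      (ih fun i hi => hf i (Finset.mem_insert_of_mem hi))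

theorem finset_inf' (hs : Convex ℝ s) {t : Finset ι} (ht : t.Nonempty) {f : ι → E → ℝ}
    (hf : ∀ i ∈ t, MonotoneConcaveOn s (f i)) :
    MonotoneConcaveOn s (fun x => t.inf' ht (fun i => f i x)) := by
  refine ⟨fun x hx y hy hxy => Finset.le_inf' _ _ fun i hi =>
    (Finset.inf'_le _ hi).trans ((hf i hi).1 hx hy hxy),
    hs, fun x hx y hy a b ha hb hab => Finset.le_inf' _ _ fun i hi => ?_⟩
  refine le_trans ?_ ((hf i hi).2.2 hx hy ha hb hab)
  simp only [smul_eq_mul]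
  gcongr <;> exact Finset.inf'_le (fun i => f i _) hi

end MonotoneConcaveOn

end MonotoneConcave

theorem convex_nonneg_quadrant : Convex ℝ (Set.Ici (0 : ℝ) ×ˢ Set.Ici (0 : ℝ)) :=
  (convex_Ici 0).prod (convex_Ici 0)

theorem monotoneConcaveOn_fst :
    MonotoneConcaveOn (Set.Ici (0 : ℝ) ×ˢ Set.Ici (0 : ℝ)) (fun p : ℝ × ℝ => p.1) :=
  ⟨fun _ _ _ _ h => h.1, (LinearMap.fst ℝ ℝ ℝ).concaveOn convex_nonneg_quadrant⟩

theorem monotoneConcaveOn_snd_mul {c : ℝ} (hc : 0 ≤ c) :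
    MonotoneConcaveOn (Set.Ici (0 : ℝ) ×ˢ Set.Ici (0 : ℝ)) (fun p : ℝ × ℝ => p.2 * c) := by
  have h : MonotoneConcaveOn (Set.Ici (0 : ℝ) ×ˢ Set.Ici (0 : ℝ)) (fun p : ℝ × ℝ => p.2) :=
    ⟨fun _ _ _ _ h => h.2, (LinearMap.snd ℝ ℝ ℝ).concaveOn convex_nonneg_quadrant⟩
  simpa only [mul_comm] using h.const_mul hc

/-- Joint monotonicity on the quadrant gives monotonicity in each coordinate. -/
theorem MonotoneConcaveOn.coordinatewise {F : ℝ → ℝ → ℝ}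
    (h : MonotoneConcaveOn (Set.Ici (0 : ℝ) ×ˢ Set.Ici (0 : ℝ)) (fun p : ℝ × ℝ => F p.1 p.2)) :
    (∀ x x' y : ℝ, 0 ≤ x → x ≤ x' → 0 ≤ y → F x y ≤ F x' y) ∧
    (∀ x y y' : ℝ, 0 ≤ x → 0 ≤ y → y ≤ y' → F x y ≤ F x y') ∧
    ConcaveOn ℝ (Set.Ici (0 : ℝ) ×ˢ Set.Ici (0 : ℝ)) (fun p : ℝ × ℝ => F p.1 p.2) :=
  ⟨fun _ _ _ hx hxx hy => h.1 (Set.mk_mem_prod hx hy) (Set.mk_mem_prod (hx.trans hxx) hy)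
      (Prod.mk_le_mk.2 ⟨hxx, le_rfl⟩),
    fun _ _ _ hx hy hyy => h.1 (Set.mk_mem_prod hx hy) (Set.mk_mem_prod hx (hy.trans hyy))
      (Prod.mk_le_mk.2 ⟨le_rfl, hyy⟩),
    h.2⟩

/-- Structural properties of the backtracking value iterates in the costs: each iterate
`J^{(k)}(w)` (for `w ∈ W^B`) and `J^{(k)}(z;𝟎)` (for `0 ≤ z ≤ B−1`) is, as a function of
`(ξ_r, ξ_o)`, nondecreasing in each coordinate and jointly concave on `[0,∞)²`.
Positions `u = A+1+i`, `i : Fin B`, range over `{A+1,…,A+B}`. -/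
theorem backtracking_iterates_concave_in_costs
    (W : Finset ℝ) (hW : W.Nonempty) (hWpos : ∀ w ∈ W, 0 < w)
    (pW : ℝ → ℝ) (hpW : ∀ w ∈ W, 0 < pW w) (hpWsum : ∑ w ∈ W, pW w = 1)
    (S : Finset ℝ) (hS : S.Nonempty) (hSpos : ∀ γ ∈ S, 0 < γ)
    (θ : ℝ) (hθ : 0 < θ) (hθ1 : θ < 1)
    (A B : ℕ) (hB : 1 ≤ B)
    (Pout : ℕ → ℝ → ℝ → ℝ)
    (hPrange : ∀ r, 1 ≤ r → r ≤ A + B → ∀ γ ∈ S, ∀ w ∈ W,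
      0 ≤ Pout r γ w ∧ Pout r γ w ≤ 1)
    (hne : ((Finset.univ : Finset (Fin B)) ×ˢ S).Nonempty)
    -- the value iterates `J^{(k)}(w)` and `J^{(k)}(z;𝟎)` at parameters `(ξ_r, ξ_o)`
    (Jk : ℝ → ℝ → ℕ → (Fin B → ℝ) → ℝ) (Hk : ℝ → ℝ → ℕ → ℕ → ℝ)
    (hbase : ∀ ξr ξo v, Jk ξr ξo 0 v = 0) (hbase0 : ∀ ξr ξo z, Hk ξr ξo 0 z = 0)
    (hrec1 : ∀ ξr ξo k (v : Fin B → ℝ), (∀ i, v i ∈ W) →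
      Jk ξr ξo (k + 1) v =
        ((Finset.univ : Finset (Fin B)) ×ˢ S).inf' hne
          (fun p => ξr + p.2 + ξo * Pout (A + 1 + (p.1 : ℕ)) p.2 (v p.1)
            + Hk ξr ξo k (A + B - (A + 1 + (p.1 : ℕ)))))
    (hrec2 : ∀ ξr ξo k z, z ≤ B - 1 →
      Hk ξr ξo (k + 1) z =
        (∑ j ∈ Finset.Icc 1 (A + B - z), (1 - θ) ^ (j - 1) * θ *
          ∑ w ∈ W, pW w * S.inf' hS (fun γ => γ + ξo * Pout (z + j) γ w))
        + (1 - θ) ^ (A + B - z) *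
          ∑ v : Fin B → {x // x ∈ W},
            (∏ i, pW (v i)) * Jk ξr ξo k (fun i => (v i : ℝ))) :
    ∀ k : ℕ,
      (∀ v : Fin B → ℝ, (∀ i, v i ∈ W) →
        (∀ ξr ξr' ξo : ℝ, 0 ≤ ξr → ξr ≤ ξr' → 0 ≤ ξo →
          Jk ξr ξo k v ≤ Jk ξr' ξo k v) ∧
        (∀ ξr ξo ξo' : ℝ, 0 ≤ ξr → 0 ≤ ξo → ξo ≤ ξo' →
          Jk ξr ξo k v ≤ Jk ξr ξo' k v) ∧
        ConcaveOn ℝ (Set.Ici (0 : ℝ) ×ˢ Set.Ici (0 : ℝ))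
          (fun p : ℝ × ℝ => Jk p.1 p.2 k v)) ∧
      (∀ z, z ≤ B - 1 →
        (∀ ξr ξr' ξo : ℝ, 0 ≤ ξr → ξr ≤ ξr' → 0 ≤ ξo →
          Hk ξr ξo k z ≤ Hk ξr' ξo k z) ∧
        (∀ ξr ξo ξo' : ℝ, 0 ≤ ξr → 0 ≤ ξo → ξo ≤ ξo' →
          Hk ξr ξo k z ≤ Hk ξr ξo' k z) ∧
        ConcaveOn ℝ (Set.Ici (0 : ℝ) ×ˢ Set.Ici (0 : ℝ))
          (fun p : ℝ × ℝ => Hk p.1 p.2 k z)) := by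
  have hQ := convex_nonneg_quadrant
  have hθ' : 0 ≤ 1 - θ := by linarith
  suffices h : ∀ k : ℕ,
      (∀ v : Fin B → ℝ, (∀ i, v i ∈ W) →
        MonotoneConcaveOn (Set.Ici (0 : ℝ) ×ˢ Set.Ici (0 : ℝ))
          (fun p : ℝ × ℝ => Jk p.1 p.2 k v)) ∧
      (∀ z, z ≤ B - 1 →
        MonotoneConcaveOn (Set.Ici (0 : ℝ) ×ˢ Set.Ici (0 : ℝ))
          (fun p : ℝ × ℝ => Hk p.1 p.2 k z)) from
    fun k => ⟨fun v hv => ((h k).1 v hv).coordinatewise (F := fun x y => Jk x y k v),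
      fun z hz => ((h k).2 z hz).coordinatewise (F := fun x y => Hk x y k z)⟩
  intro k
  induction k with
  | zero =>
    simp only [hbase, hbase0]
    exact ⟨fun _ _ => .const hQ 0, fun _ _ => .const hQ 0⟩
  | succ k ih =>
    obtain ⟨ihJ, ihH⟩ := ih
    refine ⟨fun v hv => ?_, fun z hz => ?_⟩
    · simp only [hrec1 _ _ k v hv]
      refine .finset_inf' hQ hne fun q hq => ?_
      have hi := q.1.isLt
      exact ((monotoneConcaveOn_fst.add (.const hQ _)).add
        (monotoneConcaveOn_snd_mul (hPrange _ (by omega) (by omega) _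
          (Finset.mem_product.1 hq).2 _ (hv _)).1)).add (ihH _ (by omega))
    · simp only [hrec2 _ _ k z hz]
      refine .add (.sum hQ fun j hj => .const_mul (by positivity) <| .sum hQ fun w hw =>
          .const_mul (hpW w hw).le <| .finset_inf' hQ hS fun γ hγ =>
            .add (.const hQ γ) (monotoneConcaveOn_snd_mul ?_))
        (.const_mul (by positivity) <| .sum hQ fun v _ =>
          .const_mul (Finset.prod_nonneg fun i _ => (hpW _ (v i).2).le)
            (ihJ _ fun i => (v i).2))
      rw [Finset.mem_Icc] at hj
      exact (hPrange _ (by omega) (by omega) γ hγ w hw).1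
end

section
/- Correctness of the reduced function iteration for the sum-power no-backtracking problem: in the setting of the sum-power no-backtracking value iteration, define the reduced iteration V^{(0)}(r) := 0 for A+1 ≤ r ≤ A+B, V^{(0)}(𝟎) := 0, and for k ≥ 0: V^{(k+1)}(r) = Σ_{w∈W} p_W(w)·min{ m(r,w) + ξ_r + V^{(k)}(𝟎) , θ·E_W m(r+1,·) + (1−θ)·V^{(k)}(r+1) } for A+1 ≤ r ≤ A+B−1; V^{(k+1)}(A+B) = Σ_{w∈W} p_W(w)·( m(A+B,w) + ξ_r ) + V^{(k)}(𝟎); V^{(k+1)}(𝟎) = Σ_{j=1}^{A+1} (1−θ)^{j−1}·θ·E_W m(j,·) + (1−θ)^{A+1}·V^{(k)}(A+1). Then for every k ≥ 0 and every A+1 ≤ r ≤ A+B: V^{(k)}(r) = Σ_{w∈W} p_W(w)·J^{(k)}(r,w) and V^{(k)}(𝟎) = J₀^{(k)}, where (J^{(k)}, J₀^{(k)}) are the value iterates defined by (J^{(0)}, J₀^{(0)}) = (0,0) and (J^{(k+1)}, J₀^{(k+1)}) = T(J^{(k)}, J₀^{(k)}). -/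
noncomputable section

/-- Expectation `E_W f = Σ_{w∈W} p_W(w) f(w)` over the shadowing. -/
def EW (W : Finset ℝ) (pW : ℝ → ℝ) (f : ℝ → ℝ) : ℝ := ∑ w ∈ W, pW w * f w

/-- Optimal one-hop cost `m(r,w) = min_{γ∈S}(γ + ξ_o·P_out(r,γ,w))`. -/
def hopCost (S : Finset ℝ) (hS : S.Nonempty) (Pout : ℕ → ℝ → ℝ → ℝ) (ξo : ℝ)
    (r : ℕ) (w : ℝ) : ℝ :=
  S.inf' hS fun γ => γ + ξo * Pout r γ w

/-- The Bellman operator `T` of the sum-power no-backtracking problem, acting on pairs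
`(J, J₀)`. -/
def bellmanT (W : Finset ℝ) (pW : ℝ → ℝ) (S : Finset ℝ) (hS : S.Nonempty)
    (Pout : ℕ → ℝ → ℝ → ℝ) (θ ξo ξr : ℝ) (A B : ℕ)
    (p : (ℕ → ℝ → ℝ) × ℝ) : (ℕ → ℝ → ℝ) × ℝ :=
  (fun r w =>
    if r = A + B then hopCost S hS Pout ξo (A + B) w + ξr + p.2
    else if A + 1 ≤ r ∧ r ≤ A + B - 1 then
      min (hopCost S hS Pout ξo r w + ξr + p.2)
          (θ * EW W pW (hopCost S hS Pout ξo (r + 1))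
            + (1 - θ) * EW W pW (p.1 (r + 1)))
    else 0,
   (∑ k ∈ Finset.Icc 1 (A + 1), (1 - θ) ^ (k - 1) * θ * EW W pW (hopCost S hS Pout ξo k))
     + (1 - θ) ^ (A + 1) * EW W pW (p.1 (A + 1)))

/-- Correctness of the reduced function iteration for the sum-power no-backtracking
problem: the reduced iterates `V^{(k)}` coincide with the `W`-averages of the value
iterates `J^{(k)}`, and `V^{(k)}(𝟎) = J₀^{(k)}`. -/
theorem reduced_iteration_correct
    (W : Finset ℝ) (hW : W.Nonempty) (hWpos : ∀ w ∈ W, 0 < w)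
    (pW : ℝ → ℝ) (hpW : ∀ w ∈ W, 0 < pW w) (hpWsum : ∑ w ∈ W, pW w = 1)
    (S : Finset ℝ) (hS : S.Nonempty) (hSpos : ∀ γ ∈ S, 0 < γ)
    (θ : ℝ) (hθ : 0 < θ) (hθ1 : θ < 1)
    (ξo ξr : ℝ) (hξo : 0 ≤ ξo) (hξr : 0 ≤ ξr)
    (A B : ℕ) (hB : 2 ≤ B)
    (Pout : ℕ → ℝ → ℝ → ℝ)
    (hPrange : ∀ r, 1 ≤ r → r ≤ A + B → ∀ γ ∈ S, ∀ w ∈ W,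
      0 ≤ Pout r γ w ∧ Pout r γ w ≤ 1)
    -- the value iterates `(J^{(k)}, J₀^{(k)}) = T^k (0, 0)`
    (Jk : ℕ → (ℕ → ℝ → ℝ) × ℝ)
    (hJk : ∀ k, Jk k = (bellmanT W pW S hS Pout θ ξo ξr A B)^[k] (fun _ _ => 0, 0))
    -- the reduced iterates `(V^{(k)}, V^{(k)}(𝟎))`
    (Vk : ℕ → (ℕ → ℝ) × ℝ)
    (hV0 : ∀ r, (Vk 0).1 r = 0) (hV0' : (Vk 0).2 = 0)
    (hVrec : ∀ k : ℕ,
      (∀ r, A + 1 ≤ r → r ≤ A + B - 1 →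
        (Vk (k + 1)).1 r = ∑ w ∈ W, pW w *
          min (hopCost S hS Pout ξo r w + ξr + (Vk k).2)
              (θ * EW W pW (hopCost S hS Pout ξo (r + 1))
                + (1 - θ) * (Vk k).1 (r + 1))) ∧
      ((Vk (k + 1)).1 (A + B)
        = (∑ w ∈ W, pW w * (hopCost S hS Pout ξo (A + B) w + ξr)) + (Vk k).2) ∧
      ((Vk (k + 1)).2
        = (∑ j ∈ Finset.Icc 1 (A + 1),
            (1 - θ) ^ (j - 1) * θ * EW W pW (hopCost S hS Pout ξo j))
          + (1 - θ) ^ (A + 1) * (Vk k).1 (A + 1))) :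
    ∀ k : ℕ,
      (∀ r, A + 1 ≤ r → r ≤ A + B →
        (Vk k).1 r = ∑ w ∈ W, pW w * (Jk k).1 r w) ∧
      (Vk k).2 = (Jk k).2 := by
  intro k
  induction k with
  | zero => simp [hV0, hV0', hJk]
  | succ k ih =>
    obtain ⟨ihV, ihV₀⟩ := ih
    obtain ⟨hmid, hlast, hzero⟩ := hVrec k
    have hstep : Jk (k + 1) = bellmanT W pW S hS Pout θ ξo ξr A B (Jk k) := by
      rw [hJk, hJk, Function.iterate_succ_apply']
    have ihE : ∀ r, A + 1 ≤ r → r ≤ A + B → (Vk k).1 r = EW W pW ((Jk k).1 r) := ihV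
    rw [hstep]
    refine ⟨fun r hr hrB => ?_, ?_⟩
    · rcases eq_or_ne r (A + B) with rfl | hne
      · simp only [bellmanT, if_true]
        rw [hlast, ihV₀]
        simp only [mul_add, Finset.sum_add_distrib, ← Finset.sum_mul, hpWsum, one_mul]
      · have hr' : r ≤ A + B - 1 := by omega
        rw [hmid r hr hr', ihE (r + 1) (by omega) (by omega), ihV₀]
        simp only [bellmanT, if_neg hne, if_pos (And.intro hr hr')]
    · rw [hzero, ihE (A + 1) le_rfl (by omega)]
      rfl
end
end
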